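/- arXiv:1806.05494 — 6 statements merged into one kernel-verified Lean document; each statement's English description precedes it below -/
import Mathlib

section
/- Fix quaternions u₁ and u₂ over ℝ. The linear operator A on the quaternions defined by A u = u₁ * (star u) * u₂ has Hermitian adjoint A⁺ v = u₂ * (star v) * u₁; that is, for all quaternions u and v, ⟪u₁ * (star u) * u₂, v⟫ = ⟪u, u₂ * (star v) * u₁⟫. -/
open Quaternion RealInnerProductSpace

section QuaternionAlgebra

variable {R : Type*} [CommRing R] {c₁ c₂ : R}

theorem quaternionAlgebra_re_mul_comm (a b : ℍ[R,c₁,c₂]) : (a * b).re = (b * a).re := by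
  simp only [QuaternionAlgebra.re_mul]
  ring

theorem quaternionAlgebra_re_star (a : ℍ[R,c₁,c₂]) : (star a).re = a.re := by
  rw [QuaternionAlgebra.re_star, zero_mul, add_zero]

theorem quaternion_triple_adjoint_general (u₁ u₂ u v : ℍ[R,c₁,c₂]) :
    (u₁ * star u * u₂ * star v).re = (u * star (u₂ * star v * u₁)).re :=
  calc
    (u₁ * star u * u₂ * star v).re = ((u₁ * star u) * (u₂ * star v)).re := by
      rw [mul_assoc (u₁ * star u)]
    _ = ((u₂ * star v) * (u₁ * star u)).re := quaternionAlgebra_re_mul_comm _ _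
    _ = (star (u * star (u₂ * star v * u₁))).re := by
      rw [star_mul, star_star, mul_assoc (u₂ * star v)]
    _ = (u * star (u₂ * star v * u₁)).re := quaternionAlgebra_re_star _

end QuaternionAlgebra

theorem quaternion_triple_adjoint (u₁ u₂ : ℍ) :
    ∀ u v : ℍ, ⟪u₁ * star u * u₂, v⟫ = ⟪u, u₂ * star v * u₁⟫ := by
  intro u v
  rw [Quaternion.inner_def, Quaternion.inner_def]
  exact quaternion_triple_adjoint_general u₁ u₂ u v
end

section
/- For any quaternions u₁, u, u₂ over ℝ, the triple anticommutator {u₁, u, u₂} = (u₁ * (star u) * u₂ + u₂ * (star u) * u₁) / 2 equals the linear combination ⟪u₁, u⟫ • u₂ - ⟪u₁, u₂⟫ • u + ⟪u, u₂⟫ • u₁. -/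
/-! Polarizing `a * star a = N a` and `star a * a = N a` shows that `a * star b + b * star a` and
`star a * b + star b * a` are the same scalar. The first fact moves `u` to the front in both
`u₁ * star u * u₂` and `u₂ * star u * u₁`; the second evaluates the remaining term
`-u * (star u₁ * u₂ + star u₂ * u₁)`. -/

open Quaternion RealInnerProductSpace

section QuaternionAlgebra

variable {R : Type*} [CommRing R] {c₁ c₂ c₃ : R}

/-- The reduced trace of a quaternion algebra: the scalar `a + star a`, as an element of the base
ring. Here `i ^ 2 = c₁ + c₂ * i`, so `i` has trace `c₂`. The polar form of the reduced norm is
`reducedTrace (a * star b)`, which on `ℍ` is twice the inner product. -/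
def reducedTrace (a : ℍ[R,c₁,c₂,c₃]) : R :=
  2 * a.re + c₂ * a.imI

theorem self_add_star_eq_coe_reducedTrace (a : ℍ[R,c₁,c₂,c₃]) :
    a + star a = ↑(reducedTrace a) :=
  QuaternionAlgebra.self_add_star' a

theorem reducedTrace_star (a : ℍ[R,c₁,c₂,c₃]) : reducedTrace (star a) = reducedTrace a := by
  simp only [reducedTrace, QuaternionAlgebra.re_star, QuaternionAlgebra.imI_star]
  ring

theorem reducedTrace_mul_comm (a b : ℍ[R,c₁,c₂,c₃]) :
    reducedTrace (a * b) = reducedTrace (b * a) := by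
  simp only [reducedTrace, QuaternionAlgebra.re_mul, QuaternionAlgebra.imI_mul]
  ring

theorem reducedTrace_mul_star_comm (a b : ℍ[R,c₁,c₂,c₃]) :
    reducedTrace (a * star b) = reducedTrace (b * star a) := by
  rw [← reducedTrace_star, star_mul, star_star]

theorem mul_star_add_mul_star_eq_coe_reducedTrace (a b : ℍ[R,c₁,c₂,c₃]) :
    a * star b + b * star a = ↑(reducedTrace (a * star b)) := by
  rw [← self_add_star_eq_coe_reducedTrace, star_mul, star_star]

theorem star_mul_add_star_mul_eq_coe_reducedTrace (a b : ℍ[R,c₁,c₂,c₃]) :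
    star a * b + star b * a = ↑(reducedTrace (a * star b)) := by
  rw [reducedTrace_mul_comm, ← self_add_star_eq_coe_reducedTrace, star_mul, star_star, add_comm]

theorem mul_star_mul_eq_reducedTrace_smul_sub (a b c : ℍ[R,c₁,c₂,c₃]) :
    a * star b * c = reducedTrace (a * star b) • c - b * (star a * c) := by
  rw [← QuaternionAlgebra.coe_mul_eq_smul, ← mul_star_add_mul_star_eq_coe_reducedTrace, add_mul,
    mul_assoc b, add_sub_cancel_right]

theorem quaternion_triple_anticommutator_general (u₁ u u₂ : ℍ[R,c₁,c₂,c₃]) :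
    u₁ * star u * u₂ + u₂ * star u * u₁ =
      reducedTrace (u₁ * star u) • u₂ - reducedTrace (u₁ * star u₂) • u +
        reducedTrace (u * star u₂) • u₁ :=
  calc u₁ * star u * u₂ + u₂ * star u * u₁
    _ = reducedTrace (u₁ * star u) • u₂ - u * (star u₁ * u₂ + star u₂ * u₁) +
          reducedTrace (u * star u₂) • u₁ := by
      rw [mul_star_mul_eq_reducedTrace_smul_sub u₁, mul_star_mul_eq_reducedTrace_smul_sub u₂,
        reducedTrace_mul_star_comm u₂, mul_add]
      abel
    _ = reducedTrace (u₁ * star u) • u₂ - reducedTrace (u₁ * star u₂) • u +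
          reducedTrace (u * star u₂) • u₁ := by
      rw [star_mul_add_star_mul_eq_coe_reducedTrace, QuaternionAlgebra.mul_coe_eq_smul]

theorem reducedTrace_eq_two_mul_re (a : ℍ[R,c₁,0,c₃]) : reducedTrace a = 2 * a.re := by
  rw [reducedTrace, zero_mul, add_zero]

end QuaternionAlgebra

theorem reducedTrace_mul_star_eq_two_mul_inner (a b : ℍ) :
    reducedTrace (a * star b : ℍ) = 2 * ⟪a, b⟫ :=
  reducedTrace_eq_two_mul_re _

theorem quaternion_triple_anticommutator (u₁ u u₂ : ℍ) :
    (u₁ * star u * u₂ + u₂ * star u * u₁) / 2 =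
      ⟪u₁, u⟫ • u₂ - ⟪u₁, u₂⟫ • u + ⟪u, u₂⟫ • u₁ := by
  have anticomm : u₁ * star u * u₂ + u₂ * star u * u₁ =
      (2 * ⟪u₁, u⟫) • u₂ - (2 * ⟪u₁, u₂⟫) • u + (2 * ⟪u, u₂⟫) • u₁ := by
    simp only [← reducedTrace_mul_star_eq_two_mul_inner]
    exact quaternion_triple_anticommutator_general (c₁ := -1) (c₂ := 0) (c₃ := -1) u₁ u u₂
  have : CharZero ℍ := algebraRat.charZero ℍ
  rw [anticomm, div_eq_iff two_ne_zero, mul_two]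
  module
end

section
/- For any quaternions u₁, u, u₂ over ℝ, the triple commutator [u₁, u, u₂] = (u₁ * (star u) * u₂ - u₂ * (star u) * u₁) / 2 is orthogonal to each of its three arguments: ⟪[u₁, u, u₂], u₁⟫ = 0, ⟪[u₁, u, u₂], u⟫ = 0, and ⟪[u₁, u, u₂], u₂⟫ = 0. -/
open Quaternion RealInnerProductSpace

/-!
The real part is a trace, `re (x * y) = re (y * x)`, and `a * star a = star a * a` is a scalar.
Pairing the two terms of the commutator with an outer argument, one can therefore rotate
`a * star a` together and pull it out, leaving `re (b * c)` in one term and `re (c * b)` in the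
other. Pairing them with the middle argument gives `re ((a * b) * (c * b))` and
`re ((c * b) * (a * b))`.
-/

section QuaternionAlgebra

variable {R : Type*} [CommRing R] {c₁ c₂ c₃ : R}

theorem quaternionAlgebra_re_mul_comm_s9 (x y : ℍ[R,c₁,c₃]) : (x * y).re = (y * x).re := by
  simp only [QuaternionAlgebra.re_mul]
  ring

theorem quaternionAlgebra_re_mul_mul_star_self (x a : ℍ[R,c₁,c₂,c₃]) :
    (x * a * star a).re = (a * star a).re * x.re := by
  rw [mul_assoc, QuaternionAlgebra.mul_star_eq_coe, QuaternionAlgebra.mul_coe_eq_smul,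
    QuaternionAlgebra.re_smul, smul_eq_mul, QuaternionAlgebra.re_coe]

theorem quaternionAlgebra_re_mul_mul_mul_star_comm (a b c : ℍ[R,c₁,c₃]) :
    (a * b * c * star a).re = (c * b * a * star a).re :=
  calc
    (a * b * c * star a).re = (b * c * star a * a).re := by
      rw [mul_assoc a, mul_assoc a, quaternionAlgebra_re_mul_comm_s9]
    _ = (b * c * a * star a).re := by
      rw [mul_assoc, star_comm_self' a, ← mul_assoc]
    _ = (a * star a).re * (b * c).re := quaternionAlgebra_re_mul_mul_star_self _ _
    _ = (a * star a).re * (c * b).re := by rw [quaternionAlgebra_re_mul_comm_s9 b c]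
    _ = (c * b * a * star a).re := (quaternionAlgebra_re_mul_mul_star_self _ _).symm

theorem quaternionAlgebra_re_mul_mul_mul_rotate (a b c d : ℍ[R,c₁,c₃]) :
    (a * b * c * d).re = (c * d * a * b).re := by
  rw [mul_assoc (a * b), quaternionAlgebra_re_mul_comm_s9, ← mul_assoc]

-- The factor `1 / 2` of the commutator is omitted so that `R` may have characteristic two.
theorem quaternion_commutator_orthogonal_args_general (u₁ u u₂ : ℍ[R,c₁,c₃]) :
    ((u₁ * star u * u₂ - u₂ * star u * u₁) * star u₁).re = 0 ∧
    ((u₁ * star u * u₂ - u₂ * star u * u₁) * star u).re = 0 ∧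
    ((u₁ * star u * u₂ - u₂ * star u * u₁) * star u₂).re = 0 := by
  simp only [sub_mul, QuaternionAlgebra.re_sub, sub_eq_zero]
  exact ⟨quaternionAlgebra_re_mul_mul_mul_star_comm u₁ (star u) u₂,
    quaternionAlgebra_re_mul_mul_mul_rotate u₁ (star u) u₂ (star u),
    (quaternionAlgebra_re_mul_mul_mul_star_comm u₂ (star u) u₁).symm⟩

end QuaternionAlgebra

theorem quaternion_inner_div_coe_left (x y : ℍ) (r : ℝ) : ⟪x / (r : ℍ), y⟫ = ⟪x, y⟫ / r := by
  rw [div_eq_mul_inv, ← Quaternion.coe_inv, Quaternion.mul_coe_eq_smul, real_inner_smul_left,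
    inv_mul_eq_div]

theorem quaternion_commutator_orthogonal_args (u₁ u u₂ : ℍ) :
    ⟪(u₁ * star u * u₂ - u₂ * star u * u₁) / 2, u₁⟫ = 0 ∧
    ⟪(u₁ * star u * u₂ - u₂ * star u * u₁) / 2, u⟫ = 0 ∧
    ⟪(u₁ * star u * u₂ - u₂ * star u * u₁) / 2, u₂⟫ = 0 := by
  have inner_half_eq_zero {x y : ℍ} (h : (x * star y).re = 0) : ⟪x / 2, y⟫ = 0 :=
    (quaternion_inner_div_coe_left x y 2).trans (div_eq_zero_iff.mpr (.inl h))
  exact (quaternion_commutator_orthogonal_args_general u₁ u u₂).imp inner_half_eq_zero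
    (.imp inner_half_eq_zero inner_half_eq_zero)
end

section
/- For any quaternions u₁, u, u₂ over ℝ, the squared norm of the triple anticommutator satisfies ‖{u₁, u, u₂}‖² = ‖u₁‖² * ‖u‖² * ‖u₂‖² - det G, where G is the 3×3 Gram matrix with entries G = !![⟪u₁,u₁⟫, ⟪u₁,u⟫, ⟪u₁,u₂⟫; ⟪u₁,u⟫, ⟪u,u⟫, ⟪u,u₂⟫; ⟪u₁,u₂⟫, ⟪u,u₂⟫, ⟪u₂,u₂⟫]. -/
open Quaternion RealInnerProductSpace Matrix

/-! The Clifford relation `x * star y + y * star x = 2 * ⟪x, y⟫` and its mirror image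
`star x * y + star y * x = 2 * ⟪x, y⟫` turn `u₁ * star u * u₂` into `-(u₂ * star u * u₁)` up to
real multiples of `u₁`, `u` and `u₂`, so the triple anticommutator is the real linear combination
`⟪u₁, u⟫ • u₂ + ⟪u, u₂⟫ • u₁ - ⟪u₁, u₂⟫ • u`. The squared norm of that combination equals
`‖u₁‖² ‖u‖² ‖u₂‖² - det G` in every real inner product space. -/

section Quaternion

variable {R : Type*} [CommRing R]

lemma quaternion_re_star_mul (x y : ℍ[R]) : (star x * y).re = (x * star y).re := by
  simp [Quaternion.re_mul]

lemma quaternion_mul_star_add_mul_star (x y : ℍ[R]) :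
    x * star y + y * star x = ((2 * (x * star y).re : R) : ℍ[R]) := by
  simpa only [star_mul, star_star] using Quaternion.self_add_star' (x * star y)

lemma quaternion_star_mul_add_star_mul (x y : ℍ[R]) :
    star x * y + star y * x = ((2 * (x * star y).re : R) : ℍ[R]) := by
  simpa only [star_mul, star_star, quaternion_re_star_mul] using
    Quaternion.self_add_star' (star x * y)

lemma quaternion_mul_star_mul_add_mul_star_mul (x y z : ℍ[R]) :
    x * star y * z + z * star y * x =
      (2 : R) • ((x * star y).re • z + (y * star z).re • x - (x * star z).re • y) :=
  calc
    x * star y * z + z * star y * x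
      = (x * star y + y * star x) * z + (y * star z + z * star y) * x
          - y * (star x * z + star z * x) := by noncomm_ring
    _ = (2 * (x * star y).re) • z + (2 * (y * star z).re) • x - (2 * (x * star z).re) • y := by
      rw [quaternion_mul_star_add_mul_star, quaternion_mul_star_add_mul_star,
        quaternion_star_mul_add_star_mul, Quaternion.coe_mul_eq_smul,
        Quaternion.coe_mul_eq_smul, Quaternion.mul_coe_eq_smul]
    _ = (2 : R) • ((x * star y).re • z + (y * star z).re • x - (x * star z).re • y) := by
      module

end Quaternion

lemma quaternion_anticommutator_eq {R : Type*} [Field R] [LinearOrder R]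
    [IsStrictOrderedRing R] (x y z : ℍ[R]) :
    (x * star y * z + z * star y * x) / 2 =
      (x * star y).re • z + (y * star z).re • x - (x * star z).re • y := by
  have two_ne : (2 : ℍ[R]) ≠ 0 := by
    exact_mod_cast Quaternion.coe_injective.ne (two_ne_zero (α := R))
  rw [div_eq_iff two_ne, mul_two, ← two_smul R, quaternion_mul_star_mul_add_mul_star_mul]

section InnerProductSpace

variable {E : Type*} [SeminormedAddCommGroup E] [InnerProductSpace ℝ E]

lemma gram_vec_three (x y z : E) :
    gram ℝ ![x, y, z] =
      !![⟪x, x⟫, ⟪x, y⟫, ⟪x, z⟫;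
         ⟪x, y⟫, ⟪y, y⟫, ⟪y, z⟫;
         ⟪x, z⟫, ⟪y, z⟫, ⟪z, z⟫] := by
  ext i j
  fin_cases i <;> fin_cases j <;> simp [gram_apply, real_inner_comm]

lemma det_gram_vec_three (x y z : E) :
    (gram ℝ ![x, y, z]).det =
      ‖x‖ ^ 2 * ‖y‖ ^ 2 * ‖z‖ ^ 2 + 2 * ⟪x, y⟫ * ⟪y, z⟫ * ⟪x, z⟫
        - ⟪x, y⟫ ^ 2 * ‖z‖ ^ 2 - ⟪y, z⟫ ^ 2 * ‖x‖ ^ 2 - ⟪x, z⟫ ^ 2 * ‖y‖ ^ 2 := by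
  rw [gram_vec_three, det_fin_three]
  simp only [of_apply, cons_val, real_inner_self_eq_norm_sq]
  ring

lemma norm_sq_inner_smul_add_inner_smul_sub_inner_smul (x y z : E) :
    ‖⟪x, y⟫ • z + ⟪y, z⟫ • x - ⟪x, z⟫ • y‖ ^ 2 =
      ‖x‖ ^ 2 * ‖y‖ ^ 2 * ‖z‖ ^ 2 - (gram ℝ ![x, y, z]).det := by
  rw [det_gram_vec_three, norm_sub_sq_real, norm_add_sq_real]
  simp only [norm_smul, mul_pow, Real.norm_eq_abs, sq_abs, inner_add_left,
    real_inner_smul_left, real_inner_smul_right, real_inner_comm x z, real_inner_comm y z]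
  ring

end InnerProductSpace

theorem quaternion_anticommutator_norm_sq (u₁ u u₂ : ℍ) :
    ‖(u₁ * star u * u₂ + u₂ * star u * u₁) / 2‖ ^ 2 =
      ‖u₁‖ ^ 2 * ‖u‖ ^ 2 * ‖u₂‖ ^ 2 -
        Matrix.det !![⟪u₁, u₁⟫, ⟪u₁, u⟫, ⟪u₁, u₂⟫;
                      ⟪u₁, u⟫, ⟪u, u⟫, ⟪u, u₂⟫;
                      ⟪u₁, u₂⟫, ⟪u, u₂⟫, ⟪u₂, u₂⟫] := by
  rw [← gram_vec_three, ← norm_sq_inner_smul_add_inner_smul_sub_inner_smul,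
    quaternion_anticommutator_eq]
  simp only [Quaternion.inner_def]
end

section
/- For any quaternions u₁, u, u₂ over ℝ, the squared norms of the triple anticommutator and the triple commutator add up to the product of the squared norms of the arguments: ‖{u₁, u, u₂}‖² + ‖[u₁, u, u₂]‖² = ‖u₁‖² * ‖u‖² * ‖u₂‖². -/
open Quaternion RealInnerProductSpace

theorem norm_mul_star_mul {A : Type*} [NonUnitalSeminormedRing A] [NormMulClass A]
    [StarAddMonoid A] [NormedStarGroup A] (a b c : A) :
    ‖a * star b * c‖ = ‖a‖ * ‖b‖ * ‖c‖ := by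
  rw [norm_mul, norm_mul, _root_.norm_star]

section NormedDivisionRing

variable {A : Type*} [NormedDivisionRing A] [InnerProductSpace ℝ A]

theorem norm_add_div_two_sq_add_norm_sub_div_two_sq (x y : A) :
    ‖(x + y) / 2‖ ^ 2 + ‖(x - y) / 2‖ ^ 2 = (‖x‖ ^ 2 + ‖y‖ ^ 2) / 2 := by
  have norm_two : ‖(2 : A)‖ = 2 := by simpa using RCLike.norm_nsmul ℝ 2 (1 : A)
  rw [norm_div, norm_div, norm_two]
  linear_combination parallelogram_law_with_norm ℝ x y / 4

theorem quaternion_pythagoras_triple_general [StarAddMonoid A] [NormedStarGroup A]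
    (u₁ u u₂ : A) :
    ‖(u₁ * star u * u₂ + u₂ * star u * u₁) / 2‖ ^ 2 +
      ‖(u₁ * star u * u₂ - u₂ * star u * u₁) / 2‖ ^ 2 =
        ‖u₁‖ ^ 2 * ‖u‖ ^ 2 * ‖u₂‖ ^ 2 := by
  rw [norm_add_div_two_sq_add_norm_sub_div_two_sq, norm_mul_star_mul, norm_mul_star_mul]
  ring

end NormedDivisionRing

theorem quaternion_pythagoras_triple (u₁ u u₂ : ℍ) :
    ‖(u₁ * star u * u₂ + u₂ * star u * u₁) / 2‖ ^ 2 +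
      ‖(u₁ * star u * u₂ - u₂ * star u * u₁) / 2‖ ^ 2 =
        ‖u₁‖ ^ 2 * ‖u‖ ^ 2 * ‖u₂‖ ^ 2 := by
  exact quaternion_pythagoras_triple_general u₁ u u₂
end

section
/- For any quaternions u₁, u, u₂ over ℝ, the Gram determinant of the imaginary parts equals half the difference of the Gram determinant and the determinant of the matrix of inner products with conjugated second arguments: det G' = (det G - det H) / 2, where G = !![⟪u₁,u₁⟫, ⟪u₁,u⟫, ⟪u₁,u₂⟫; ⟪u₁,u⟫, ⟪u,u⟫, ⟪u,u₂⟫; ⟪u₁,u₂⟫, ⟪u,u₂⟫, ⟪u₂,u₂⟫], H = !![⟪u₁, star u₁⟫, ⟪u₁, star u⟫, ⟪u₁, star u₂⟫; ⟪u₁, star u⟫, ⟪u, star u⟫, ⟪u, star u₂⟫; ⟪u₁, star u₂⟫, ⟪u, star u₂⟫, ⟪u₂, star u₂⟫], and G' is the Gram matrix of the imaginary parts u₁' = u₁ - (u₁.re) • 1, u' = u - (u.re) • 1, u₂' = u₂ - (u₂.re) • 1. -/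
/-!
Fix a line `𝕜 ∙ e` in an inner product space, and let `P` and `Q` be the Gram matrices of the
projections of a family `v` to the line and to its orthogonal complement. Then `P + Q` is the Gram
matrix of `v`, while reflecting the second argument in the line gives `P - Q`. As `P` has rank at
most one, `det (Q + t P)` is affine in `t`, so `det (Q + P) + det (Q - P) = 2 det Q`; in odd size
`det (Q - P) = -det (P - Q)`. For quaternions and `e = 1`, the reflection is the conjugation and
the projection to the orthogonal complement is the imaginary part.
-/

open Quaternion RealInnerProductSpace Matrix

section Determinant

variable {n R : Type*} [Fintype n] [DecidableEq n] [CommRing R]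

-- Only the last column of the bordered matrix depends on `u`, and it does so affinely.
theorem det_sub_vecMulVec_eq_det_updateCol (A : Matrix n n R) (u v : n → R) :
    (A - vecMulVec u v).det =
      ((fromBlocks A 0 (replicateRow Unit v) 1).updateCol (Sum.inr ()) (Sum.elim u 1)).det := by
  rw [vecMulVec_eq Unit, ← det_fromBlocks_one₂₂]
  congr 1
  ext (i | i) (j | j) <;> simp

theorem det_add_vecMulVec_add_det_sub_vecMulVec (A : Matrix n n R) (u v : n → R) :
    (A + vecMulVec u v).det + (A - vecMulVec u v).det = 2 * A.det := by
  have hcol : Sum.elim (-u) 1 + Sum.elim u 1 = (2 : R) • Sum.elim (0 : n → R) (1 : Unit → R) := by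
    ext (i | i) <;> simp [one_add_one_eq_two]
  calc (A + vecMulVec u v).det + (A - vecMulVec u v).det
      = (A - vecMulVec (-u) v).det + (A - vecMulVec u v).det := by
        rw [neg_vecMulVec, sub_neg_eq_add]
    _ = 2 * (A - vecMulVec 0 v).det := by
        simp only [det_sub_vecMulVec_eq_det_updateCol, ← det_updateCol_add, hcol,
          det_updateCol_smul]
    _ = 2 * A.det := by rw [zero_vecMulVec, sub_zero]

end Determinant

section InnerProductSpace

variable {𝕜 E n : Type*} [RCLike 𝕜] [NormedAddCommGroup E] [InnerProductSpace 𝕜 E]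

theorem inner_starProjection_right_eq_inner_starProjection (K : Submodule 𝕜 E)
    [K.HasOrthogonalProjection] (x y : E) :
    inner 𝕜 x (K.starProjection y) = inner 𝕜 (K.starProjection x) (K.starProjection y) := by
  rw [K.inner_starProjection_left_eq_right,
    Submodule.starProjection_eq_self_iff.mpr (K.starProjection_apply_mem y)]

theorem inner_eq_inner_starProjection_add (K : Submodule 𝕜 E) [K.HasOrthogonalProjection]
    (x y : E) :
    inner 𝕜 x y = inner 𝕜 (K.starProjection x) (K.starProjection y) +
      inner 𝕜 (Kᗮ.starProjection x) (Kᗮ.starProjection y) := by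
  rw [← inner_starProjection_right_eq_inner_starProjection,
    ← inner_starProjection_right_eq_inner_starProjection, ← inner_add_right,
    K.starProjection_add_starProjection_orthogonal]

theorem inner_reflection_eq_inner_starProjection_sub (K : Submodule 𝕜 E)
    [K.HasOrthogonalProjection] (x y : E) :
    inner 𝕜 x (K.reflection y) = inner 𝕜 (K.starProjection x) (K.starProjection y) -
      inner 𝕜 (Kᗮ.starProjection x) (Kᗮ.starProjection y) := by
  have hy : K.reflection y = K.starProjection y - Kᗮ.starProjection y := by
    rw [K.reflection_apply, K.starProjection_orthogonal_val]
    module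
  rw [hy, inner_sub_right, inner_starProjection_right_eq_inner_starProjection K,
    inner_starProjection_right_eq_inner_starProjection Kᗮ]

theorem exists_gram_starProjection_span_singleton_eq_vecMulVec (e : E) (v : n → E) :
    ∃ a b : n → 𝕜, gram 𝕜 (fun i ↦ (𝕜 ∙ e).starProjection (v i)) = vecMulVec a b := by
  choose c hc using fun i ↦
    Submodule.mem_span_singleton.mp ((𝕜 ∙ e).starProjection_apply_mem (v i))
  refine ⟨fun i ↦ inner 𝕜 (c i • e) e, c, ?_⟩
  ext i j
  rw [gram_apply, ← hc i, ← hc j, inner_smul_right, vecMulVec_apply, mul_comm]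

theorem det_gram_starProjection_orthogonal_span_singleton [Fintype n] [DecidableEq n]
    (hn : Odd (Fintype.card n)) (e : E) (v : n → E) :
    (gram 𝕜 fun i ↦ (𝕜 ∙ e)ᗮ.starProjection (v i)).det =
      ((gram 𝕜 v).det - (of fun i j ↦ inner 𝕜 (v i) ((𝕜 ∙ e).reflection (v j))).det) / 2 := by
  set P := gram 𝕜 fun i ↦ (𝕜 ∙ e).starProjection (v i) with hP
  set Q := gram 𝕜 fun i ↦ (𝕜 ∙ e)ᗮ.starProjection (v i)
  have hG : gram 𝕜 v = P + Q :=
    ext fun i j ↦ inner_eq_inner_starProjection_add (𝕜 ∙ e) (v i) (v j)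
  have hH : (of fun i j ↦ inner 𝕜 (v i) ((𝕜 ∙ e).reflection (v j))) = P - Q :=
    ext fun i j ↦ inner_reflection_eq_inner_starProjection_sub (𝕜 ∙ e) (v i) (v j)
  have hneg : (P - Q).det = -(Q - P).det := by
    rw [← neg_sub Q P, det_neg, hn.neg_one_pow, neg_one_mul]
  obtain ⟨a, b, hab⟩ := exists_gram_starProjection_span_singleton_eq_vecMulVec (𝕜 := 𝕜) e v
  rw [hG, hH, hneg, sub_neg_eq_add, add_comm P Q, hP, hab,
    det_add_vecMulVec_add_det_sub_vecMulVec, mul_div_cancel_left₀ _ two_ne_zero]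

end InnerProductSpace

theorem quaternion_starProjection_span_one (a : ℍ) :
    (ℝ ∙ (1 : ℍ)).starProjection a = a.re • (1 : ℍ) := by
  simp [Submodule.starProjection_unit_singleton, Quaternion.inner_def]

theorem quaternion_reflection_span_one (a : ℍ) : (ℝ ∙ (1 : ℍ)).reflection a = star a := by
  rw [Submodule.reflection_apply, quaternion_starProjection_span_one, two_nsmul, ← add_smul,
    ← two_mul, ← Quaternion.coe_mul_eq_smul, mul_one, ← Quaternion.star_eq_two_re_sub]

theorem quaternion_inner_star_comm (a b : ℍ) : ⟪a, star b⟫ = ⟪b, star a⟫ := by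
  simp only [Quaternion.inner_def, star_star, Quaternion.re_mul]
  ring

theorem quaternion_gram_det_halfdiff_general {n : Type*} [Fintype n] [DecidableEq n]
    (hn : Odd (Fintype.card n)) (v : n → ℍ) :
    (gram ℝ fun i ↦ v i - (v i).re • (1 : ℍ)).det =
      ((gram ℝ v).det - (of fun i j ↦ ⟪v i, star (v j)⟫).det) / 2 := by
  simpa only [Submodule.starProjection_orthogonal_val, quaternion_starProjection_span_one,
    quaternion_reflection_span_one]
    using det_gram_starProjection_orthogonal_span_singleton (𝕜 := ℝ) hn 1 v

theorem quaternion_gram_det_halfdiff (u₁ u u₂ : ℍ) :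
    Matrix.det
      !![⟪u₁ - u₁.re • (1 : ℍ), u₁ - u₁.re • (1 : ℍ)⟫, ⟪u₁ - u₁.re • (1 : ℍ), u - u.re • (1 : ℍ)⟫,
           ⟪u₁ - u₁.re • (1 : ℍ), u₂ - u₂.re • (1 : ℍ)⟫;
         ⟪u₁ - u₁.re • (1 : ℍ), u - u.re • (1 : ℍ)⟫, ⟪u - u.re • (1 : ℍ), u - u.re • (1 : ℍ)⟫,
           ⟪u - u.re • (1 : ℍ), u₂ - u₂.re • (1 : ℍ)⟫;
         ⟪u₁ - u₁.re • (1 : ℍ), u₂ - u₂.re • (1 : ℍ)⟫, ⟪u - u.re • (1 : ℍ), u₂ - u₂.re • (1 : ℍ)⟫,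
           ⟪u₂ - u₂.re • (1 : ℍ), u₂ - u₂.re • (1 : ℍ)⟫] =
      (Matrix.det !![⟪u₁, u₁⟫, ⟪u₁, u⟫, ⟪u₁, u₂⟫;
                     ⟪u₁, u⟫, ⟪u, u⟫, ⟪u, u₂⟫;
                     ⟪u₁, u₂⟫, ⟪u, u₂⟫, ⟪u₂, u₂⟫] -
       Matrix.det !![⟪u₁, star u₁⟫, ⟪u₁, star u⟫, ⟪u₁, star u₂⟫;
                     ⟪u₁, star u⟫, ⟪u, star u⟫, ⟪u, star u₂⟫;
                     ⟪u₁, star u₂⟫, ⟪u, star u₂⟫, ⟪u₂, star u₂⟫]) / 2 := by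
  convert quaternion_gram_det_halfdiff_general (by decide) ![u₁, u, u₂] using 4 <;> ext i j <;>
    fin_cases i <;> fin_cases j <;> simp [real_inner_comm, quaternion_inner_star_comm]
end
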